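/- Let X = ℓ∞³, Y = ℓ₁³, and let T : X → Y be a bounded linear operator with ‖T‖ = 1 such that M_T ∩ Ext(B_X) = {±x₁, ±x₂, ±x₃, ±x₄}. Suppose Tx is smooth for every x ∈ M_T ∩ Ext(B_X) (i.e., |S₁| = 8), and suppose ±J(Tx_i) = ±J(Tx_j) for all x_i, x_j ∈ S₁. Then T is 3-smooth, i.e., dim span J(T) = 3. -/

import Mathlib

open Metric Set Module Pointwise

noncomputable section

/-- `J x` is the set of supporting functionals of `x`. -/
def suppFunctionals {E : Type*} [NormedAddCommGroup E] [NormedSpace ℝ E] (x : E) :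
    Set (E →L[ℝ] ℝ) := {f | ‖f‖ = 1 ∧ f x = 1}

/-- ℓ∞³ : ℝ³ with the max norm. -/
abbrev Linf3 := Fin 3 → ℝ

/-- ℓ₁³ : ℝ³ with the ℓ¹ norm. -/
abbrev L13 := PiLp 1 (fun _ : Fin 3 => ℝ)

def x₁ : Linf3 := ![1, 1, 1]
def x₂ : Linf3 := ![-1, 1, 1]
def x₃ : Linf3 := ![-1, -1, 1]
def x₄ : Linf3 := ![1, -1, 1]

/-- `M_T ∩ Ext(B_X)`: the norm-attainment set of `T` intersected with the
extreme points of the closed unit ball. -/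
def MTExt (T : Linf3 →L[ℝ] L13) : Set Linf3 :=
  {x ∈ sphere (0 : Linf3) 1 | ‖T x‖ = ‖T‖} ∩ extremePoints ℝ (closedBall (0 : Linf3) 1)

/-- `Sk T k` is the set `S_k` of points `x` of `M_T ∩ Ext(B_X)` such that `T x` is
`k`-smooth. -/
def Sk (T : Linf3 →L[ℝ] L13) (k : ℕ) : Set Linf3 :=
  {x ∈ MTExt T | finrank ℝ (Submodule.span ℝ (suppFunctionals (T x))) = k}

/-- `±A`, i.e. `A ∪ (-A)`. -/
def pm {E : Type*} [NormedAddCommGroup E] [NormedSpace ℝ E] (A : Set (E →L[ℝ] ℝ)) :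
    Set (E →L[ℝ] ℝ) := A ∪ (-A)

/-- The functional on ℓ₁³ with coefficient vector `σ`. -/
def Sf (σ : Fin 3 → ℝ) : L13 →L[ℝ] ℝ :=
  ∑ j, σ j • (PiLp.proj 1 (fun _ : Fin 3 => ℝ) j : L13 →L[ℝ] ℝ)

lemma Sf_apply (σ : Fin 3 → ℝ) (y : L13) : Sf σ y = ∑ j, σ j * y j := by
  simp [Sf]

lemma L13_norm (y : L13) : ‖y‖ = ∑ j, |y j| := by
  rw [PiLp.norm_eq_of_L1]; simp

lemma Sf_norm_le (σ : Fin 3 → ℝ) (hσ : ∀ j, |σ j| = 1) : ‖Sf σ‖ ≤ 1 := by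
  refine ContinuousLinearMap.opNorm_le_bound _ zero_le_one fun y => ?_
  rw [Sf_apply, L13_norm, one_mul, Real.norm_eq_abs]
  refine (Finset.abs_sum_le_sum_abs _ _).trans (le_of_eq ?_)
  simp [abs_mul, hσ]

lemma Sf_mem (σ : Fin 3 → ℝ) (hσ : ∀ j, |σ j| = 1) (y : L13) (hy : ‖y‖ = 1)
    (h : ∀ j, σ j * y j = |y j|) : Sf σ ∈ suppFunctionals y := by
  have h1 : Sf σ y = 1 := by
    rw [Sf_apply, ← hy, L13_norm]; exact Finset.sum_congr rfl fun j _ => h j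
  refine ⟨le_antisymm (Sf_norm_le σ hσ) ?_, h1⟩
  have := (Sf σ).le_opNorm y
  rw [h1, hy] at this
  simpa using this

lemma one_dim {V : Type*} [AddCommGroup V] [Module ℝ V] (W : Submodule ℝ V)
    (h : finrank ℝ W = 1) : ∃ v : W, v ≠ 0 ∧ ∀ w : W, ∃ c : ℝ, c • v = w :=
  finrank_eq_one_iff'.1 h

lemma supp_unique {E : Type*} [NormedAddCommGroup E] [NormedSpace ℝ E] {y : E} (h : finrank ℝ (Submodule.span ℝ (suppFunctionals y)) = 1)
    {f g : E →L[ℝ] ℝ} (hf : f ∈ suppFunctionals y) (hg : g ∈ suppFunctionals y) : f = g := by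
  obtain ⟨v, -, hv⟩ := one_dim _ h
  obtain ⟨a, ha⟩ := hv ⟨f, Submodule.subset_span hf⟩
  obtain ⟨b, hb⟩ := hv ⟨g, Submodule.subset_span hg⟩
  have ha' : a • (v : E →L[ℝ] ℝ) = f := congrArg Subtype.val ha
  have hb' : b • (v : E →L[ℝ] ℝ) = g := congrArg Subtype.val hb
  have h1 : a * (v : E →L[ℝ] ℝ) y = 1 := by rw [← hf.2, ← ha']; rfl
  have h2 : b * (v : E →L[ℝ] ℝ) y = 1 := by rw [← hg.2, ← hb']; rfl
  have h3 : (v : E →L[ℝ] ℝ) y ≠ 0 := by rintro h0; simp [h0] at h1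
  have : a = b := mul_right_cancel₀ h3 (h1.trans h2.symm)
  rw [← ha', ← hb', this]

/-- Sign, with a prescribed value at zero. -/
def sg (c t : ℝ) : ℝ := if t = 0 then c else if 0 < t then 1 else -1

lemma sg_abs (c t : ℝ) (hc : |c| = 1) : |sg c t| = 1 := by
  unfold sg; split_ifs <;> simp [hc]

lemma sg_mul (c t : ℝ) : sg c t * t = |t| := by
  unfold sg
  split_ifs with h1 h2
  · simp [h1]
  · simp [abs_of_pos h2]
  · simp [abs_of_nonpos (not_lt.1 h2)]

lemma coord_ne {y : L13} (hy : ‖y‖ = 1)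
    (h : finrank ℝ (Submodule.span ℝ (suppFunctionals y)) = 1) (j : Fin 3) : y j ≠ 0 := by
  intro h0
  have hp := Sf_mem (fun j => sg 1 (y j)) (fun j => sg_abs _ _ (by simp)) y hy (fun j => sg_mul _ _)
  have hm := Sf_mem (fun j => sg (-1) (y j)) (fun j => sg_abs _ _ (by simp)) y hy
    (fun j => sg_mul _ _)
  have := congrArg (fun f => f (WithLp.toLp 1 (Pi.single j (1 : ℝ)))) (supp_unique h hp hm)
  simp [Sf_apply, sg, h0] at this
  norm_num at this

lemma norm_le_of_vertices (A : Linf3 →L[ℝ] L13) (h1 : ‖A x₁‖ ≤ 1) (h2 : ‖A x₂‖ ≤ 1)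
    (h3 : ‖A x₃‖ ≤ 1) (h4 : ‖A x₄‖ ≤ 1) : ‖A‖ ≤ 1 := by
  refine ContinuousLinearMap.opNorm_le_of_unit_norm zero_le_one fun x hx => ?_
  have hb : ∀ j, |x j| ≤ 1 := fun j => by
    have := norm_le_pi_norm x j
    rwa [hx] at this
  obtain ⟨a1, a2⟩ := abs_le.1 (hb 0)
  obtain ⟨b1, b2⟩ := abs_le.1 (hb 1)
  obtain ⟨c1, c2⟩ := abs_le.1 (hb 2)
  set a := x 0
  set b := x 1
  set c := x 2
  have key : ∀ p q r p' q' r' : ℝ, 0 ≤ p → 0 ≤ q → 0 ≤ r → 0 ≤ p' → 0 ≤ q' → 0 ≤ r' →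
      |(p*q*r - p'*q'*r')/8| ≤ (p*q*r + p'*q'*r')/8 := by
    intro p q r p' q' r' _ _ _ _ _ _
    have : 0 ≤ p*q*r := by positivity
    have : 0 ≤ p'*q'*r' := by positivity
    rw [abs_le]; constructor <;> linarith
  have k1 := key (1+a) (1+b) (1+c) (1-a) (1-b) (1-c) (by linarith) (by linarith) (by linarith)
    (by linarith) (by linarith) (by linarith)
  have k2 := key (1-a) (1+b) (1+c) (1+a) (1-b) (1-c) (by linarith) (by linarith) (by linarith)
    (by linarith) (by linarith) (by linarith)
  have k3 := key (1-a) (1-b) (1+c) (1+a) (1+b) (1-c) (by linarith) (by linarith) (by linarith)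
    (by linarith) (by linarith) (by linarith)
  have k4 := key (1+a) (1-b) (1+c) (1-a) (1+b) (1-c) (by linarith) (by linarith) (by linarith)
    (by linarith) (by linarith) (by linarith)
  set w1 := ((1+a)*(1+b)*(1+c) - (1-a)*(1-b)*(1-c))/8 with hw1
  set w2 := ((1-a)*(1+b)*(1+c) - (1+a)*(1-b)*(1-c))/8 with hw2
  set w3 := ((1-a)*(1-b)*(1+c) - (1+a)*(1+b)*(1-c))/8 with hw3
  set w4 := ((1+a)*(1-b)*(1+c) - (1-a)*(1+b)*(1-c))/8 with hw4
  have hxe : x = w1 • x₁ + w2 • x₂ + w3 • x₃ + w4 • x₄ := by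
    ext j
    fin_cases j
    · change a = _
      simp [x₁, x₂, x₃, x₄, hw1, hw2, hw3, hw4]; ring
    · change b = _
      simp [x₁, x₂, x₃, x₄, hw1, hw2, hw3, hw4]; ring
    · change c = _
      simp [x₁, x₂, x₃, x₄, hw1, hw2, hw3, hw4]; ring
  have hs : ∀ (w : ℝ) (z : Linf3), ‖A z‖ ≤ 1 → ‖w • A z‖ ≤ |w| := fun w z hz => by
    rw [norm_smul, Real.norm_eq_abs]
    exact mul_le_of_le_one_right (abs_nonneg _) hz
  have e : A x = w1 • A x₁ + w2 • A x₂ + w3 • A x₃ + w4 • A x₄ := by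
    conv_lhs => rw [hxe]
    simp
  rw [e]
  have n1 := norm_add_le (w1 • A x₁ + w2 • A x₂ + w3 • A x₃) (w4 • A x₄)
  have n2 := norm_add_le (w1 • A x₁ + w2 • A x₂) (w3 • A x₃)
  have n3 := norm_add_le (w1 • A x₁) (w2 • A x₂)
  have m1 := hs w1 _ h1
  have m2 := hs w2 _ h2
  have m3 := hs w3 _ h3
  have m4 := hs w4 _ h4
  linarith

/-- The functional `A ↦ S (A v)`, linear in `v`. -/
def Phi (S : L13 →L[ℝ] ℝ) : Linf3 →ₗ[ℝ] ((Linf3 →L[ℝ] L13) →L[ℝ] ℝ) where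
  toFun v := S.comp (ContinuousLinearMap.apply ℝ L13 v)
  map_add' u v := by ext A; simp
  map_smul' c v := by ext A; simp

lemma Phi_apply (S : L13 →L[ℝ] ℝ) (v : Linf3) (A : Linf3 →L[ℝ] L13) : Phi S v A = S (A v) := rfl

lemma Phi_mem {S : L13 →L[ℝ] ℝ} (hS : ‖S‖ ≤ 1) {T : Linf3 →L[ℝ] L13} (hT : ‖T‖ = 1)
    {v : Linf3} (hv : ‖v‖ = 1) (h : S (T v) = 1) : Phi S v ∈ suppFunctionals T := by
  refine ⟨le_antisymm ?_ ?_, h⟩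
  · refine ContinuousLinearMap.opNorm_le_bound _ zero_le_one fun A => ?_
    rw [Phi_apply, one_mul]
    calc ‖S (A v)‖ ≤ ‖S‖ * ‖A v‖ := S.le_opNorm _
      _ ≤ 1 * ‖A v‖ := by gcongr
      _ ≤ ‖A‖ * ‖v‖ := by rw [one_mul]; exact A.le_opNorm _
      _ = ‖A‖ := by rw [hv, mul_one]
  · have := (Phi S v).le_opNorm T
    rw [Phi_apply, h, hT] at this
    simpa using this

/-- Perturbation along directions killed by `S` keeps the norm at a vertex. -/
lemma eventually_norm_le (σ : Fin 3 → ℝ) (hσ : ∀ j, |σ j| = 1) (y z : L13) (hy : ‖y‖ = 1)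
    (hy0 : ∀ j, y j ≠ 0) (hS : |Sf σ y| = 1) (hz : Sf σ z = 0) :
    ∀ᶠ t : ℝ in nhds 0, ‖y + t • z‖ ≤ 1 := by
  set ε := Sf σ y with hε
  have hεε : ε * ε = 1 := by rw [← abs_mul_abs_self, hS, one_mul]
  have hsum : ∑ j, ε * σ j * y j = ∑ j, |y j| := by
    rw [← L13_norm, hy, ← hεε]
    conv_rhs => rw [hε, Sf_apply σ y, ← Sf_apply σ y, ← hε]
    nth_rewrite 3 [hε]
    rw [Sf_apply, Finset.mul_sum]
    exact Finset.sum_congr rfl fun j _ => mul_assoc _ _ _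
  have hle : ∀ j ∈ Finset.univ, ε * σ j * y j ≤ |y j| := fun j _ => by
    refine (le_abs_self _).trans (le_of_eq ?_)
    rw [abs_mul, abs_mul, hS, hσ]; simp
  have heq : ∀ j, ε * σ j * y j = |y j| := fun j =>
    (Finset.sum_eq_sum_iff_of_le hle).1 hsum j (Finset.mem_univ _)
  have hev : ∀ᶠ t : ℝ in nhds 0, ∀ j, 0 < ε * σ j * (y j + t * z j) := by
    rw [Filter.eventually_all]
    intro j
    have hc : ContinuousAt (fun t : ℝ => ε * σ j * (y j + t * z j)) 0 := by fun_prop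
    refine hc.eventually (lt_mem_nhds ?_)
    simp only [zero_mul, add_zero]
    rw [heq]; exact abs_pos.2 (hy0 j)
  filter_upwards [hev] with t ht
  have h1 : ∀ j, |y j + t * z j| = ε * σ j * (y j + t * z j) := fun j => by
    rw [← abs_of_pos (ht j), abs_mul, abs_mul, hS, hσ]; simp
  rw [L13_norm]
  have h2 : ∑ j, |(y + t • z) j| = ε * Sf σ (y + t • z) := by
    rw [Sf_apply, Finset.mul_sum]
    refine Finset.sum_congr rfl fun j _ => ?_
    have := h1 j
    simp only [PiLp.add_apply, PiLp.smul_apply, smul_eq_mul]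
    rw [this]; ring
  rw [h2, map_add, map_smul, hz, smul_zero, add_zero, ← hε, hεε]

theorem stmt_9
    (T : Linf3 →L[ℝ] L13) (hT : ‖T‖ = 1)
    (hMT : MTExt T = {x₁, -x₁, x₂, -x₂, x₃, -x₃, x₄, -x₄})
    (h1 : (Sk T 1).encard = 8)
    (hJ : ∀ xi ∈ Sk T 1, ∀ xj ∈ Sk T 1,
      pm (suppFunctionals (T xi)) = pm (suppFunctionals (T xj)))
    :
    finrank ℝ (Submodule.span ℝ (suppFunctionals T)) = 3 := by
  have hfin : (MTExt T).Finite := by rw [hMT]; exact Set.toFinite _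
  have hcard : (MTExt T).encard ≤ 8 := by
    have e : MTExt T = (([x₁, -x₁, x₂, -x₂, x₃, -x₃, x₄, -x₄].toFinset : Finset Linf3) : Set Linf3) := by
      rw [hMT]; ext; simp
    rw [e, Set.encard_coe_eq_coe_finsetCard]
    exact_mod_cast List.toFinset_card_le _
  have hSk : Sk T 1 = MTExt T :=
    hfin.eq_of_subset_of_encard_le' (fun x (hx : x ∈ Sk T 1) => hx.1) (by rw [h1]; exact hcard)
  have hm1 : x₁ ∈ Sk T 1 := by rw [hSk, hMT]; simp
  have hm2 : x₂ ∈ Sk T 1 := by rw [hSk, hMT]; simp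
  have hm3 : x₃ ∈ Sk T 1 := by rw [hSk, hMT]; simp
  have hm4 : x₄ ∈ Sk T 1 := by rw [hSk, hMT]; simp
  have hn : ∀ x ∈ Sk T 1, ‖T x‖ = 1 := fun x hx => hx.1.1.2.trans hT
  have hx1 : ∀ x ∈ Sk T 1, ‖x‖ = 1 := fun x hx => by simpa using hx.1.1.1
  have hne : ∀ x ∈ Sk T 1, ∀ j, T x j ≠ 0 := fun x hx => coord_ne (hn x hx) hx.2
  let σ : Fin 3 → ℝ := fun j => sg 1 (T x₁ j)
  have hσ : ∀ j, |σ j| = 1 := fun j => sg_abs _ _ (by simp)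
  have hS1 : Sf σ ∈ suppFunctionals (T x₁) := Sf_mem σ hσ _ (hn _ hm1) (fun j => sg_mul _ _)
  have hSx : ∀ x ∈ Sk T 1, |Sf σ (T x)| = 1 := by
    intro x hx
    have : Sf σ ∈ pm (suppFunctionals (T x)) := by
      rw [← hJ x₁ hm1 x hx]; exact Or.inl hS1
    rcases this with h | h
    · rw [h.2]; simp
    · have := h.2
      rw [← abs_neg]
      change -(Sf σ (T x)) = 1 at this
      rw [this]; simp
  have hSn := Sf_norm_le σ hσ
  -- functionals in `J(T)` kill operators annihilated by `S`
  have hkill : ∀ F ∈ suppFunctionals T, ∀ A : Linf3 →L[ℝ] L13, (∀ v, Sf σ (A v) = 0) → F A = 0 := by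
    intro F hF A hA
    have hev : ∀ x ∈ Sk T 1, ∀ᶠ t : ℝ in nhds 0, ‖T x + t • A x‖ ≤ 1 := fun x hx =>
      eventually_norm_le σ hσ _ _ (hn x hx) (hne x hx) (hSx x hx) (hA x)
    have hevn : ∀ᶠ t : ℝ in nhds 0, t * F A ≤ 0 := by
      filter_upwards [hev _ hm1, hev _ hm2, hev _ hm3, hev _ hm4] with t t1 t2 t3 t4
      have hb : ‖T + t • A‖ ≤ 1 := norm_le_of_vertices _ t1 t2 t3 t4
      have := (le_abs_self _).trans (F.le_opNorm (T + t • A))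
      rw [hF.1, map_add, map_smul, hF.2, smul_eq_mul] at this
      linarith
    obtain ⟨δ, hδ, hball⟩ := Metric.eventually_nhds_iff.1 hevn
    have p1 := hball (y := δ / 2) (by rw [Real.dist_eq, sub_zero, abs_of_pos] <;> linarith)
    have p2 := hball (y := -(δ / 2)) (by
      rw [Real.dist_eq, sub_zero, abs_neg, abs_of_pos] <;> linarith)
    have : δ / 2 * F A = 0 := by linarith
    rcases mul_eq_zero.1 this with h | h
    · linarith
    · exact h
  let E : Fin 3 → (Linf3 →L[ℝ] L13) := fun j =>
    (ContinuousLinearMap.proj j : Linf3 →L[ℝ] ℝ).smulRight (T x₁)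
  have hE : ∀ j v, Sf σ (E j v) = v j := fun j v => by
    simp [E, hS1.2]
  have hspan : Submodule.span ℝ (suppFunctionals T) = LinearMap.range (Phi (Sf σ)) := by
    apply le_antisymm
    · rw [Submodule.span_le]
      intro F hF
      refine ⟨fun j => F (E j), ?_⟩
      ext A
      have hz := hkill F hF (A - ∑ j, Sf σ (A (Pi.single j 1)) • E j) (by
        intro v
        have hv : v = ∑ j, v j • (Pi.single j (1 : ℝ) : Linf3) := by
          ext i; simp [Finset.sum_apply, Pi.single_apply]
        have : Sf σ (A v) = ∑ j, v j * Sf σ (A (Pi.single j 1)) := by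
          conv_lhs => rw [hv]
          simp only [map_sum, map_smul, smul_eq_mul]
        simp only [_root_.sub_apply, _root_.sum_apply,
          _root_.smul_apply, map_sub, map_sum, map_smul, hE, this, smul_eq_mul]
        simp [mul_comm])
      rw [map_sub, map_sum, sub_eq_zero] at hz
      rw [hz, Phi_apply]
      have hv : (fun j => F (E j)) = ∑ j, F (E j) • (Pi.single j (1 : ℝ) : Linf3) := by
        ext i; simp [Finset.sum_apply, Pi.single_apply]
      rw [hv]
      simp only [map_sum, map_smul, smul_eq_mul]
      simp [mul_comm]
    · have hmem : ∀ x ∈ Sk T 1, Phi (Sf σ) x ∈ Submodule.span ℝ (suppFunctionals T) := by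
        intro x hx
        rcases eq_or_eq_neg_of_abs_eq (hSx x hx) with h | h
        · exact Submodule.subset_span (Phi_mem hSn hT (hx1 x hx) h)
        · have := Phi_mem (v := -x) hSn hT (by rw [norm_neg, hx1 x hx]) (by simp [h])
          have h2 := Submodule.smul_mem _ (-1 : ℝ) (Submodule.subset_span (R := ℝ) this)
          have h3 : (-1 : ℝ) • Phi (Sf σ) (-x) = Phi (Sf σ) x := by
            rw [← map_smul]; simp
          rwa [h3] at h2
      rintro _ ⟨v, rfl⟩
      have hv : v = (v 0 / 2 + v 2 / 2) • x₁ + (v 1 / 2 - v 0 / 2) • x₂ +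
          (v 2 / 2 - v 1 / 2) • x₃ := by
        ext j
        fin_cases j <;> simp [x₁, x₂, x₃] <;> ring
      rw [hv, map_add, map_add, map_smul, map_smul, map_smul]
      exact Submodule.add_mem _ (Submodule.add_mem _ (Submodule.smul_mem _ _ (hmem _ hm1))
        (Submodule.smul_mem _ _ (hmem _ hm2))) (Submodule.smul_mem _ _ (hmem _ hm3))
  have hinj : Function.Injective (Phi (Sf σ)) := by
    intro u v huv
    ext j
    have := congrArg (fun F => F (E j)) huv
    simpa only [Phi_apply, hE] using this
  rw [hspan, LinearMap.finrank_range_of_inj hinj]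
  simp
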